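/- Let G be an interval graph with interval representation I and right-endpoint ordering σ, and let P=(P_1,u,w,P_2,v,P_3) be a normal path of G in which w is the immediate successor of u and v ∈ N(u). If u <_σ w, then u <_σ x <_σ v for every vertex x ∈ V(P_2) ∪ {w}. -/

import Mathlib

/-- `p` is a normal path of the interval graph `G` with right-endpoint function `r`:
it is a path (consecutive vertices adjacent, no repeated vertex), its first vertex is
the leftmost vertex of the path in the right-endpoint ordering, and each vertex `p[i+1]`
is the leftmost (in the right-endpoint ordering) vertex among the later path vertices
that are adjacent to `p[i]`. -/
def IsNormalPath {V : Type*} (G : SimpleGraph V) (r : V → ℝ) (p : List V) : Prop :=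
  p.Chain' G.Adj ∧ p.Nodup ∧
  (∀ (h : p ≠ []), ∀ v ∈ p, r (p.head h) ≤ r v) ∧
  (∀ i j : ℕ, ∀ (hi : i + 1 < p.length) (hj : j < p.length), i + 1 ≤ j →
    G.Adj (p[i]'(by omega)) (p[j]'hj) → r (p[i+1]'hi) ≤ r (p[j]'hj))

/-- `u` occurs strictly before `w` on the list `p`. -/
def Before {V : Type*} (p : List V) (u w : V) : Prop :=
  ∃ q1 q2 q3 : List V, p = q1 ++ u :: q2 ++ w :: q3

/-!
Right-endpoint orderings have no umbrella: if `a` is at or left of `b`, `b` is left of `c` and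
`a ∼ c`, then `b ∼ c`. Suppose that `y` comes after `u` on a normal path but lies to its left. Then
`u ∼ y`: since the path starts at its leftmost vertex, `u` has a predecessor `a`, and `a` either
lies at or left of `y`, so that the edge `au` passes over `y`, or lies right of `y`, which is
impossible, as inductively `a ∼ y` and normality would have preferred `y` to `u` as the successor
of `a`. Normality at `u` now shows that a path stepping right from `u` never returns to the left of
`u`. So every `x` between `u` and `v` lies right of `u`; as long as `x` is also left of `v`, the
edge `uv` forces `x ∼ v`, and normality at `x` keeps the successor of `x` left of `v` as well.
-/

/-- The vertex ordering given by the keys `r` is an interval ordering of `G`: an edge from `a` to a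
larger vertex `c` forces all vertices between them to be adjacent to `c`. It is the form
in which right-endpoint orderings act on normal paths. The tie `r a = r b` is included; for
injective `r` this adds nothing to the usual condition `a < b < c`. -/
def IsIntervalOrdering {V α : Type*} [Preorder α] (G : SimpleGraph V) (r : V → α) : Prop :=
  ∀ ⦃a b c : V⦄, r a ≤ r b → r b < r c → G.Adj a c → G.Adj b c

theorem isIntervalOrdering_rightEndpoint {V α : Type*} [Preorder α] {G : SimpleGraph V}
    {l r : V → α} (hlr : ∀ v, l v ≤ r v)
    (hadj : ∀ u v, G.Adj u v ↔ u ≠ v ∧ l u ≤ r v ∧ l v ≤ r u) : IsIntervalOrdering G r := by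
  intro a b c hab hbc hac
  obtain ⟨-, -, hca⟩ := (hadj a c).1 hac
  exact (hadj b c).2 ⟨ne_of_apply_ne r hbc.ne, (hlr b).trans hbc.le, hca.trans hab⟩

namespace IsNormalPath

variable {V : Type*} {G : SimpleGraph V} {r : V → ℝ} {p q : List V} {u w y : V}

theorem head_le (hP : IsNormalPath G r (u :: q)) (hy : y ∈ q) : r u ≤ r y :=
  hP.2.2.1 (List.cons_ne_nil u q) y (List.mem_cons_of_mem u hy)

theorem adj_next (hP : IsNormalPath G r (p ++ u :: w :: q)) : G.Adj u w :=
  (List.isChain_append_cons_cons.1 hP.1).2.1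

theorem next_le_of_adj (hP : IsNormalPath G r (p ++ u :: w :: q)) (hy : y ∈ w :: q)
    (huy : G.Adj u y) : r w ≤ r y := by
  obtain ⟨k, hk, rfl⟩ := List.mem_iff_getElem.1 hy
  have hleftmost := hP.2.2.2 p.length (p.length + 1 + k)
    (by simp)
    (by simp only [List.length_append, List.length_cons] at hk ⊢; omega)
    (by omega)
  simpa [List.getElem_append_right, Nat.add_assoc, Nat.add_comm 1 k, huy] using hleftmost

theorem adj_of_lt (hG : IsIntervalOrdering G r) (hP : IsNormalPath G r (p ++ u :: q))
    (hy : y ∈ q) (hyu : r y < r u) : G.Adj u y := by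
  induction p using List.reverseRecOn generalizing u q with
  | nil => exact absurd hyu (hP.head_le hy).not_gt
  | append_singleton p a ih =>
    rw [List.append_assoc, List.singleton_append] at hP
    rcases le_or_gt (r a) (r y) with hay | hya
    · exact (hG hay hyu hP.adj_next).symm
    · have hadj : G.Adj a y := ih hP (List.mem_cons_of_mem u hy) hya
      exact absurd hyu (hP.next_le_of_adj (List.mem_cons_of_mem u hy) hadj).not_gt

theorem le_of_le_next (hG : IsIntervalOrdering G r)
    (hP : IsNormalPath G r (p ++ u :: w :: q)) (huw : r u ≤ r w) (hy : y ∈ w :: q) :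
    r u ≤ r y := by
  by_contra! hyu
  have hwy : r w ≤ r y := hP.next_le_of_adj hy (hP.adj_of_lt hG hy hyu)
  exact (hwy.trans_lt hyu).not_ge huw

theorem lt_of_lt_next (hG : IsIntervalOrdering G r) (hr : Function.Injective r)
    (hP : IsNormalPath G r (p ++ u :: w :: q)) (huw : r u < r w) (hy : y ∈ w :: q) :
    r u < r y := by
  have hne : u ≠ y := by
    rintro rfl
    exact (List.nodup_cons.1 hP.2.1.of_append_right).1 hy
  exact (hP.le_of_le_next hG huw.le hy).lt_of_ne (hr.ne hne)

theorem lt_of_adj_of_forall_adj {p₁ p₂ p₃ : List V} {v x : V} (hr : Function.Injective r)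
    (hP : IsNormalPath G r (p₁ ++ u :: (p₂ ++ v :: p₃))) (huv : G.Adj u v)
    (hadj : ∀ z ∈ p₂, r z < r v → G.Adj z v) (hx : x ∈ p₂) : r x < r v := by
  induction p₂ generalizing p₁ u with
  | nil => simp at hx
  | cons z p₂ ih =>
    have hne : z ≠ v := by
      rintro rfl
      simpa [List.nodup_append] using hP.2.1
    have hzv : r z < r v := (hP.next_le_of_adj (by simp) huv).lt_of_ne (hr.ne hne)
    rcases List.mem_cons.1 hx with rfl | hx
    · exact hzv
    · refine ih (p₁ := p₁ ++ [u]) (by simpa using hP) (hadj z List.mem_cons_self hzv) ?_ hx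
      exact fun t ht => hadj t (List.mem_cons_of_mem z ht)

end IsNormalPath

theorem stmt7_general {V : Type*} {G : SimpleGraph V} {r : V → ℝ}
    (hG : IsIntervalOrdering G r) (hr : Function.Injective r)
    {p₁ p₂ p₃ : List V} {u w v : V}
    (hP : IsNormalPath G r (p₁ ++ u :: w :: (p₂ ++ v :: p₃)))
    (huv : G.Adj u v) (huw : r u < r w) :
    ∀ x ∈ w :: p₂, r u < r x ∧ r x < r v := by
  have hlower : ∀ x ∈ w :: p₂, r u < r x := fun x hx =>
    hP.lt_of_lt_next hG hr huw (List.mem_append_left (v :: p₃) hx)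
  have hadj : ∀ x ∈ w :: p₂, r x < r v → G.Adj x v := fun x hx hxv =>
    hG (hlower x hx).le hxv huv
  exact fun x hx => ⟨hlower x hx, hP.lt_of_adj_of_forall_adj (p₂ := w :: p₂) hr huv hadj hx⟩

theorem stmt7 {V : Type*} [Fintype V]
    (G : SimpleGraph V) (l r : V → ℝ)
    (hlr : ∀ v : V, l v < r v)
    (hinjl : Function.Injective l) (hinjr : Function.Injective r)
    (hlrne : ∀ u v : V, l u ≠ r v)
    (hadj : ∀ u v : V, G.Adj u v ↔ u ≠ v ∧ l u ≤ r v ∧ l v ≤ r u)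
    (p1 p2 p3 : List V) (u w v : V)
    (hnp : IsNormalPath G r (p1 ++ u :: w :: (p2 ++ v :: p3)))
    (huv : G.Adj u v)
    (hsigma : r u < r w) :
    ∀ x ∈ w :: p2, r u < r x ∧ r x < r v :=
  stmt7_general (isIntervalOrdering_rightEndpoint (fun v => (hlr v).le) hadj) hinjr hnp huv hsigma
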